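/- For every x ∈ ℝ with x ≠ 0, lim_{t→b−} ∂_x A(t,x) = sign(x), where sign(x) = 1 if x > 0 and −1 if x < 0. -/

import Mathlib

/-!
With `s = √(b - t)`, differentiation under the Gaussian integral gives
`∂ₓA = E[sign(x + z s) exp(m'|x + z s|)] / E[exp(m'|x + z s|)]`: the integrand is locally
Lipschitz in `x` with a Gaussian-integrable constant, and its kink is only seen at the single point
`z = -x / s`, a null set (`hasDerivAt_integral_exp_abs`). As `t → b⁻`, `s → 0⁺`, and since `sign` is
continuous at `x ≠ 0`, dominated convergence (with dominating function `exp(m'(|x| + |z|))`) shows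
that numerator and denominator converge to `sign(x) exp(m'|x|)` and `exp(m'|x|)`.
-/

open MeasureTheory ProbabilityTheory

/-- `A(t,x) = (1/m') log E[exp(m'|x + z√(b-t)|)]` for a standard Gaussian `z`. -/
noncomputable def A (b m' t x : ℝ) : ℝ :=
  (1 / m') * Real.log (∫ z, Real.exp (m' * |x + z * Real.sqrt (b - t)|) ∂(gaussianReal 0 1))

/-- Exponential moments of `c + d|z|` are finite; this provides all dominating functions. -/
lemma integrable_exp_affine_abs (m c d : ℝ) :
    Integrable (fun z : ℝ => Real.exp (m * (c + d * |z|))) (gaussianReal 0 1) := by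
  have h := (integrable_exp_mul_abs (μ := gaussianReal 0 1) (X := fun z : ℝ => z) (t := m * d)
    (integrable_exp_mul_gaussianReal _) (integrable_exp_mul_gaussianReal _)).const_mul
      (Real.exp (m * c))
  refine h.congr (Filter.Eventually.of_forall fun z => ?_)
  simp only [← Real.exp_add]
  ring_nf

lemma measurable_real_sign : Measurable Real.sign :=
  Measurable.ite measurableSet_Iio measurable_const
    (Measurable.ite measurableSet_Ioi measurable_const measurable_const)

lemma abs_real_sign_le_one (r : ℝ) : |Real.sign r| ≤ 1 := by
  rcases Real.sign_apply_eq r with h | h | h <;> simp [h]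

lemma abs_add_mul_le (x z : ℝ) {s : ℝ} (hs : 0 ≤ s) : |x + z * s| ≤ |x| + s * |z| := by
  calc |x + z * s| ≤ |x| + |z * s| := abs_add_le _ _
    _ = |x| + s * |z| := by rw [abs_mul, abs_of_nonneg hs, mul_comm]

/-- One-sided Lipschitz bound for `y ↦ exp (m|y|)`, from the tangent line of `exp` at `m|u|`; only the
larger value needs its argument in `[-R, R]`. -/
lemma exp_abs_sub_le {m : ℝ} (hm : 0 < m) {R u v : ℝ} (hu : |u| ≤ R) :
    Real.exp (m * |u|) - Real.exp (m * |v|) ≤ m * Real.exp (m * R) * |u - v| := by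
  have h1 : Real.exp (m * |v|) = Real.exp (m * |u|) * Real.exp (m * |v| - m * |u|) := by
    rw [← Real.exp_add]; ring_nf
  have h2 := Real.add_one_le_exp (m * |v| - m * |u|)
  have h3 : Real.exp (m * |u|) ≤ Real.exp (m * R) := by gcongr
  have h4 := abs_sub_abs_le_abs_sub u v
  have h5 := Real.exp_pos (m * |u|)
  calc Real.exp (m * |u|) - Real.exp (m * |v|)
      ≤ Real.exp (m * |u|) * (m * (|u| - |v|)) := by rw [h1]; nlinarith
    _ ≤ Real.exp (m * |u|) * (m * |u - v|) := by gcongr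
    _ ≤ Real.exp (m * R) * (m * |u - v|) := by gcongr
    _ = m * Real.exp (m * R) * |u - v| := by ring

lemma hasDerivAt_exp_abs (m : ℝ) {y : ℝ} (hy : y ≠ 0) :
    HasDerivAt (fun y => Real.exp (m * |y|)) (m * (Real.sign y * Real.exp (m * |y|))) y := by
  have h : HasDerivAt (fun y : ℝ => |y|) (Real.sign y) y := by
    rcases lt_or_gt_of_ne hy with h | h
    · rw [Real.sign_of_neg h]; exact hasDerivAt_abs_neg h
    · rw [Real.sign_of_pos h]; exact hasDerivAt_abs_pos h
  convert (h.const_mul m).exp using 1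
  ring

lemma integrable_exp_abs_shift {m s : ℝ} (hm : 0 < m) (hs : 0 < s) (x : ℝ) :
    Integrable (fun z => Real.exp (m * |x + z * s|)) (gaussianReal 0 1) := by
  refine (integrable_exp_affine_abs m |x| s).mono' (by fun_prop)
    (Filter.Eventually.of_forall fun z => ?_)
  rw [Real.norm_eq_abs, Real.abs_exp]
  have := abs_add_mul_le x z hs.le
  gcongr

lemma measurable_sign_mul_exp (m s x : ℝ) :
    Measurable (fun z => Real.sign (x + z * s) * Real.exp (m * |x + z * s|)) :=
  (measurable_real_sign.comp (by fun_prop)).mul (by fun_prop)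

lemma hasDerivAt_integral_exp_abs {m s : ℝ} (hm : 0 < m) (hs : 0 < s) (x : ℝ) :
    HasDerivAt (fun x => ∫ z, Real.exp (m * |x + z * s|) ∂(gaussianReal 0 1))
      (∫ z, m * (Real.sign (x + z * s) * Real.exp (m * |x + z * s|)) ∂(gaussianReal 0 1)) x := by
  -- On the unit ball around `x` the argument `|y + z s|` is at most `|x| + 1 + s|z|`.
  refine (hasDerivAt_integral_of_dominated_loc_of_lip
    (F := fun x z => Real.exp (m * |x + z * s|))
    (bound := fun z => m * Real.exp (m * ((|x| + 1) + s * |z|)))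
    (Metric.ball_mem_nhds x one_pos) (Filter.Eventually.of_forall fun y => by fun_prop)
    (integrable_exp_abs_shift hm hs x)
    ((measurable_sign_mul_exp m s x).const_mul m).aestronglyMeasurable
    (Filter.Eventually.of_forall fun z => ?_)
    ((integrable_exp_affine_abs m _ s).const_mul m) ?_).2
  · have hR : ∀ y ∈ Metric.ball x 1, |y + z * s| ≤ (|x| + 1) + s * |z| := by
      intro y hy
      rw [Metric.mem_ball, Real.dist_eq] at hy
      have h1 := abs_add_mul_le y z hs.le
      have h2 := abs_sub_abs_le_abs_sub y x
      linarith
    refine LipschitzOnWith.of_dist_le_mul fun u hu v hv => ?_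
    have hb : 0 ≤ m * Real.exp (m * ((|x| + 1) + s * |z|)) := by positivity
    rw [Real.coe_nnabs, abs_of_nonneg hb, Real.dist_eq, Real.dist_eq, abs_le]
    have h1 := exp_abs_sub_le hm (v := v + z * s) (hR u hu)
    have h2 := exp_abs_sub_le hm (v := u + z * s) (hR v hv)
    rw [add_sub_add_right_eq_sub] at h1 h2
    rw [abs_sub_comm v u] at h2
    constructor <;> linarith
  · have := nullSingletonClass_gaussianReal (μ := 0) (v := 1) one_ne_zero
    have hne : ∀ᵐ z ∂(gaussianReal 0 1), z ≠ -x / s := by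
      rw [ae_iff]
      simp
    filter_upwards [hne] with z hz
    have hy : x + z * s ≠ 0 := fun h => hz (by field_simp; linarith)
    exact (hasDerivAt_exp_abs m hy).comp_add_const x (z * s)

/-- Dominated convergence as `s → 0⁺` for `E[f(x + z s) exp(m|x + z s|)]`, where `|f| ≤ 1` and `f` is
continuous at `x`; used with `f = 1` and `f = sign`. -/
lemma tendsto_integral_mul_exp_abs {m : ℝ} (hm : 0 < m) {x : ℝ} {f : ℝ → ℝ} (hf : Measurable f)
    (hf1 : ∀ y, |f y| ≤ 1) (hfx : ContinuousAt f x) :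
    Filter.Tendsto
      (fun s => ∫ z, f (x + z * s) * Real.exp (m * |x + z * s|) ∂(gaussianReal 0 1))
      (nhdsWithin 0 (Set.Ioi 0)) (nhds (f x * Real.exp (m * |x|))) := by
  have key : Filter.Tendsto
      (fun s => ∫ z, f (x + z * s) * Real.exp (m * |x + z * s|) ∂(gaussianReal 0 1))
      (nhdsWithin 0 (Set.Ioi 0))
      (nhds (∫ _, f x * Real.exp (m * |x|) ∂(gaussianReal 0 1))) := by
    refine tendsto_integral_filter_of_dominated_convergence
      (fun z => Real.exp (m * (|x| + 1 * |z|)))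
      (Filter.Eventually.of_forall fun s =>
        ((hf.comp (by fun_prop : Measurable fun z : ℝ => x + z * s)).mul
          (by fun_prop : Measurable fun z : ℝ =>
            Real.exp (m * |x + z * s|))).aestronglyMeasurable) ?_
      (integrable_exp_affine_abs m _ 1) (Filter.Eventually.of_forall fun z => ?_)
    · filter_upwards [Ioc_mem_nhdsGT (zero_lt_one' ℝ)] with s hs
      refine Filter.Eventually.of_forall fun z => ?_
      rw [Real.norm_eq_abs, abs_mul, Real.abs_exp]
      have h1 := abs_add_mul_le x z hs.1.le
      have h2 : s * |z| ≤ 1 * |z| := by gcongr; exact hs.2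
      calc |f (x + z * s)| * Real.exp (m * |x + z * s|)
          ≤ 1 * Real.exp (m * (|x| + 1 * |z|)) := by
            gcongr
            · exact hf1 _
            · exact h1.trans (by gcongr)
        _ = _ := one_mul _
    · have h0 : Filter.Tendsto (fun s : ℝ => x + z * s) (nhdsWithin 0 (Set.Ioi 0)) (nhds x) := by
        have : Continuous fun s : ℝ => x + z * s := by fun_prop
        simpa using (this.tendsto 0).mono_left nhdsWithin_le_nhds
      have h2 : Continuous fun y : ℝ => Real.exp (m * |y|) := by fun_prop
      exact (hfx.tendsto.comp h0).mul ((h2.tendsto x).comp h0)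
  simpa using key

lemma continuousAt_real_sign {x : ℝ} (hx : x ≠ 0) : ContinuousAt Real.sign x := by
  rcases lt_or_gt_of_ne hx with h | h
  · refine continuousAt_const.congr (f := fun _ => (-1 : ℝ)) ?_
    filter_upwards [Iio_mem_nhds h] with y hy using (Real.sign_of_neg hy).symm
  · refine continuousAt_const.congr (f := fun _ => (1 : ℝ)) ?_
    filter_upwards [Ioi_mem_nhds h] with y hy using (Real.sign_of_pos hy).symm

lemma deriv_A_eq {b m t : ℝ} (hm : 0 < m) (ht : t < b) (x : ℝ) :
    deriv (A b m t) x =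
      (∫ z, Real.sign (x + z * √(b - t)) * Real.exp (m * |x + z * √(b - t)|) ∂(gaussianReal 0 1)) /
        ∫ z, Real.exp (m * |x + z * √(b - t)|) ∂(gaussianReal 0 1) := by
  have hs : 0 < √(b - t) := Real.sqrt_pos.2 (sub_pos.2 ht)
  have hpos := integral_exp_pos (integrable_exp_abs_shift hm hs x)
  have h := ((hasDerivAt_integral_exp_abs hm hs x).log hpos.ne').const_mul (1 / m)
  have h2 : deriv (A b m t) x = _ := h.deriv
  rw [h2, integral_const_mul, mul_div_assoc, ← mul_assoc, one_div_mul_cancel hm.ne', one_mul]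

/-- `∂ₓA(t,x) → sign(x)` as `t → b⁻`, for every `x ≠ 0`. -/
theorem A_deriv_tendsto_sign (a b m' : ℝ) (ha : 0 ≤ a) (hab : a < b) (hm' : 0 < m') :
    ∀ x : ℝ, x ≠ 0 →
      Filter.Tendsto (fun t => deriv (A b m' t) x)
        (nhdsWithin b (Set.Iio b)) (nhds (Real.sign x)) := by
  intro x hx
  have hs : Filter.Tendsto (fun t => √(b - t)) (nhdsWithin b (Set.Iio b))
      (nhdsWithin 0 (Set.Ioi 0)) := by
    refine tendsto_nhdsWithin_iff.2 ⟨?_, ?_⟩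
    · have : Continuous fun t => √(b - t) := by fun_prop
      simpa using (this.tendsto b).mono_left nhdsWithin_le_nhds
    · filter_upwards [self_mem_nhdsWithin] with t ht using Real.sqrt_pos.2 (sub_pos.2 ht)
  have hnum := (tendsto_integral_mul_exp_abs hm' measurable_real_sign abs_real_sign_le_one
    (continuousAt_real_sign hx)).comp hs
  have hden := (tendsto_integral_mul_exp_abs (x := x) hm' (f := fun _ => 1) measurable_const
    (by simp) continuousAt_const).comp hs
  simp only [one_mul] at hden
  have h := hnum.div hden (Real.exp_pos _).ne'
  rw [mul_div_cancel_right₀ _ (Real.exp_pos _).ne'] at h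
  refine h.congr' ?_
  filter_upwards [self_mem_nhdsWithin] with t ht
  exact (deriv_A_eq hm' ht x).symm
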